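/- Let k = ℤ[β_{a,b} : (a,b) ∈ ℕ² ∖ {(0,0)}] be the polynomial ring on countably many indeterminates, and let p(x,y) = 1 + Σ_{(a,b)≠(0,0)} β_{a,b} xᵃyᵇ ∈ k⟦x,y⟧ be the generic power series with constant term 1. With ρ₀, ρ₁ ∈ k⟦x₁,x₂⟧ the unique power series satisfying (x₁ − x₂)·ρ₀ = p(x₁,x₂) − p(x₂,x₁) and (x₁ − x₂)·ρ₁ = x₁·p(x₁,x₂) − x₂·p(x₂,x₁), the series ρ₁ is a unit of k⟦x₁,x₂⟧, and the following linear independence holds: for any finite collection of pairs (a,b) ∈ ℕ × ℤ and elements f_{a,b} of the subring ℤ⟦E₁,E₂⟧ ⊂ k⟦x₁,x₂⟧ (power series in E₁ = x₁+x₂ and E₂ = x₁x₂ with integer coefficients), the relation Σ f_{a,b}·ρ₀ᵃ·ρ₁ᵇ = 0 implies f_{a,b} = 0 for all (a,b). Equivalently, the natural map ℤ[ρ₀, ρ₁^{±1}]⟦E₁,E₂⟧ → k⟦x₁,x₂⟧ given by the power series expansions of ρ₀ and ρ₁ is injective. -/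

import Mathlib

noncomputable section
open MvPowerSeries

/-- The polynomial ring `ℤ[β_{a,b} : (a,b) ≠ (0,0)]`. -/
abbrev BetaRing : Type := MvPolynomial {ab : ℕ × ℕ // ab ≠ (0, 0)} ℤ

/-- The generic power series `p(x,y) = 1 + Σ β_{a,b} xᵃyᵇ` with constant term `1`. -/
def genericP : MvPowerSeries (Fin 2) BetaRing :=
  fun d => if h : (d 0, d 1) = (0, 0) then 1 else MvPolynomial.X ⟨(d 0, d 1), h⟩

/-- The automorphism of `k⟦x₁,x₂⟧` exchanging the two variables. -/
def swapPS {k : Type*} [CommRing k] (f : MvPowerSeries (Fin 2) k) : MvPowerSeries (Fin 2) k :=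
  fun d => MvPowerSeries.coeff (Finsupp.equivMapDomain (Equiv.swap 0 1) d) f

/-- Substitution of a family of power series (each with zero constant term) into a
multivariate power series, via the standard coefficient formula. -/
def psSubst {k : Type*} [CommRing k] {σ τ : Type*} [Fintype σ] [DecidableEq σ]
    (a : σ → MvPowerSeries τ k) (f : MvPowerSeries σ k) : MvPowerSeries τ k :=
  fun e => ∑ d ∈ Finset.Iic (Finsupp.equivFunOnFinite.symm fun _ : σ => e.sum fun _ m => m),
    (MvPowerSeries.coeff d f) * MvPowerSeries.coeff e (∏ i, a i ^ d i)

/-- `E₁ = x₁ + x₂`. -/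
def E₁ : MvPowerSeries (Fin 2) BetaRing := X 0 + X 1
/-- `E₂ = x₁·x₂`. -/
def E₂ : MvPowerSeries (Fin 2) BetaRing := X 0 * X 1

/-- Membership in the subring `ℤ⟦E₁,E₂⟧ ⊂ k⟦x₁,x₂⟧`: power series in `E₁, E₂` with
integer coefficients. -/
def InZE₁E₂ (f : MvPowerSeries (Fin 2) BetaRing) : Prop :=
  ∃ g : MvPowerSeries (Fin 2) ℤ,
    f = psSubst ![E₁, E₂] (MvPowerSeries.map (Int.castRingHom BetaRing) g)

/-!
Let `g, h` be symmetric power series with `g` of constant term `1`. The coefficients of `p` being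
indeterminates, some ring homomorphism on `k` takes `p(x₁,x₂)` to `g - x₂h`, hence `p(x₂,x₁)` to
`g - x₁h`, and therefore `ρ₀` to `h` and `ρ₁` to `g`. A polynomial relation between `ρ₀` and `ρ₁`
over `ℤ⟦x₁,x₂⟧`, a ring containing `ℤ⟦E₁,E₂⟧`, thus vanishes at all such `(h, g)`, which form a box
with infinite sides, so it is trivial. Negative powers of `ρ₁` are cleared by multiplying with a
power of the unit `ρ₁`.
-/

section Independence

variable {R A : Type*} [CommRing R] [CommRing A] [Algebra R A]

theorem algebraicIndependent_of_forall_exists_algHom [IsDomain R] {ι : Type*} {a : ι → A}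
    (s : ι → Set R) (hs : ∀ i, (s i).Infinite)
    (h : ∀ x ∈ Set.univ.pi s, ∃ φ : A →ₐ[R] R, ⇑φ ∘ a = x) : AlgebraicIndependent R a := by
  refine (injective_iff_map_eq_zero _).2 fun p hp => MvPolynomial.funext_set s hs fun x hx => ?_
  obtain ⟨φ, rfl⟩ := h x hx
  have hφ : MvPolynomial.aeval (φ ∘ a) p = φ (MvPolynomial.aeval a p) :=
    (MvPolynomial.comp_aeval_apply a φ p).symm
  rw [map_zero, ← MvPolynomial.aeval_eq_eval]
  exact hφ.trans (by rw [hp, map_zero])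

theorem linearIndependent_prod_pow_of_algebraicIndependent {ι : Type*} {a : ι → A}
    (h : AlgebraicIndependent R a) :
    LinearIndependent R fun d : ι →₀ ℕ => d.prod fun i n => a i ^ n := by
  have := (MvPolynomial.basisMonomials ι R).linearIndependent.map'
    (MvPolynomial.aeval a).toLinearMap (LinearMap.ker_eq_bot.2 h)
  simpa [Function.comp_def, MvPolynomial.aeval_monomial] using this

theorem linearIndependent_pow_mul_pow_of_algebraicIndependent {x y : A}
    (h : AlgebraicIndependent R ![x, y]) :
    LinearIndependent R fun ab : ℕ × ℕ => x ^ ab.1 * y ^ ab.2 := by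
  have hinj : Function.Injective fun ab : ℕ × ℕ => Finsupp.equivFunOnFinite.symm ![ab.1, ab.2] :=
    fun ab cd hab => by simpa [Prod.ext_iff] using hab
  simpa [Function.comp_def, Finsupp.prod_fintype] using
    (linearIndependent_prod_pow_of_algebraicIndependent h).comp _ hinj

theorem linearIndependent_pow_mul_zpow_of_algebraicIndependent {x : A} {u : Aˣ}
    (h : AlgebraicIndependent R ![x, (u : A)]) :
    LinearIndependent R fun ab : ℕ × ℤ => x ^ ab.1 * ((u ^ ab.2 : Aˣ) : A) := by
  rw [linearIndependent_iff_finset_linearIndependent]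
  intro s
  obtain ⟨N, hN⟩ : ∃ N : ℕ, ∀ ab ∈ s, 0 ≤ ab.2 + N :=
    ⟨s.sup fun ab => ab.2.natAbs, fun ab hab => by
      have := Finset.le_sup (f := fun ab : ℕ × ℤ => ab.2.natAbs) hab
      lia⟩
  have hinj : Function.Injective fun ab : s => (ab.1.1, (ab.1.2 + N).toNat) := by
    rintro ⟨⟨a, b⟩, hab⟩ ⟨⟨c, d⟩, hcd⟩ heq
    have hb := hN _ hab
    have hd := hN _ hcd
    simp only [Prod.mk.injEq, Subtype.mk.injEq] at *
    lia
  refine LinearIndependent.of_comp (LinearMap.mulRight R ((u ^ N : Aˣ) : A)) ?_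
  have hpow (ab : s) : (u : A) ^ (ab.1.2 + N).toNat = ((u ^ ab.1.2 : Aˣ) : A) * (u ^ N : Aˣ) := by
    rw [← Units.val_mul, ← Units.val_pow_eq_pow_val, ← zpow_natCast, ← zpow_natCast u N,
      ← zpow_add, Int.toNat_of_nonneg (hN _ ab.2)]
  simpa only [Function.comp_def, hpow, LinearMap.mulRight_apply, mul_assoc] using
    (linearIndependent_pow_mul_pow_of_algebraicIndependent h).comp _ hinj

theorem eq_zero_of_linearIndependent_of_sum_mul_eq_zero {ι : Type*} {v : ι → A}
    (hv : LinearIndependent R v) {s : Finset ι} {f : ι → A}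
    (hf : ∀ i ∈ s, f i ∈ Set.range (algebraMap R A))
    (h : ∑ i ∈ s, f i * v i = 0) : ∀ i ∈ s, f i = 0 := by
  choose! F hF using hf
  have hF0 : ∀ i ∈ s, F i = 0 := by
    refine linearIndependent_iff'.1 hv s F (h ▸ Finset.sum_congr rfl fun i hi => ?_)
    rw [Algebra.smul_def, hF i hi]
  intro i hi
  rw [← hF i hi, hF0 i hi, map_zero]

end Independence

section PowerSeries

variable {R : Type*} [CommRing R]

theorem X_sub_X_ne_zero {σ : Type*} [Nontrivial R] {i j : σ} (hij : i ≠ j) :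
    (X i - X j : MvPowerSeries σ R) ≠ 0 :=
  sub_ne_zero.2 (X_inj.not.2 hij)

theorem constantCoeff_eq_of_X_sub_X_mul_eq {σ : Type*} {i j : σ} (hij : i ≠ j)
    {p q ρ : MvPowerSeries σ R} (h : (X i - X j) * ρ = X i * p - X j * q) :
    constantCoeff ρ = constantCoeff p := by
  classical
  have hle : ¬ Finsupp.single j 1 ≤ Finsupp.single i 1 := fun hle => by
    simpa [Finsupp.single_apply, hij] using hle j
  have := congrArg (coeff (Finsupp.single i 1)) h
  simpa [sub_mul, X_def, coeff_monomial_mul, hle] using this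

theorem swapPS_eq_rename (f : MvPowerSeries (Fin 2) R) :
    swapPS f = rename (Equiv.swap 0 1) f := by
  ext d
  have hd : (d.equivMapDomain (Equiv.swap 0 1)).embDomain (Equiv.swap 0 1).toEmbedding = d := by
    ext i
    rw [Finsupp.embDomain_eq_mapDomain]
    fin_cases i <;> simp
  conv_rhs => rw [← hd]
  exact (coeff_embDomain_rename (Equiv.swap (0 : Fin 2) 1).toEmbedding f _).symm

theorem map_swapPS {S : Type*} [CommRing S] (φ : R →+* S) (f : MvPowerSeries (Fin 2) R) :
    map φ (swapPS f) = swapPS (map φ f) :=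
  rfl

theorem infinite_setOf_swapPS_eq_and_constantCoeff_eq_one [CharZero R] :
    {g : MvPowerSeries (Fin 2) R | swapPS g = g ∧ constantCoeff g = 1}.Infinite := by
  refine Set.infinite_of_injective_forall_mem
    (f := fun n : ℕ => 1 + C (n : R) * (X 0 + X 1)) (fun m n hmn => ?_) fun n => ⟨?_, by simp⟩
  · have := congrArg (coeff (Finsupp.single 0 1)) hmn
    simp only [map_add, coeff_C_mul] at this
    simpa [coeff_X, Finsupp.single_left_inj] using this
  · simp [swapPS_eq_rename, add_comm]

end PowerSeries

theorem constantCoeff_genericP : constantCoeff genericP = 1 :=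
  rfl

theorem exists_map_genericP_eq {R : Type*} [CommRing R] {q : MvPowerSeries (Fin 2) R}
    (hq : constantCoeff q = 1) : ∃ φ : BetaRing →+* R, map φ genericP = q := by
  refine ⟨MvPolynomial.eval₂Hom (Int.castRingHom R) fun ab =>
    coeff (Finsupp.equivFunOnFinite.symm ![ab.1.1, ab.1.2]) q, ?_⟩
  ext d
  have hd : Finsupp.equivFunOnFinite.symm ![d 0, d 1] = d := by
    ext i
    fin_cases i <;> rfl
  rw [coeff_map]
  change MvPolynomial.eval₂Hom _ _ (dite _ _ _) = _
  split_ifs with h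
  · have hd0 : d = 0 := by simpa [Prod.ext_iff, Finsupp.ext_iff, Fin.forall_fin_two] using h
    rw [map_one, hd0, coeff_zero_eq_constantCoeff_apply, hq]
  · simp [hd]

section Rho

variable {ρ₀ ρ₁ : MvPowerSeries (Fin 2) BetaRing}

theorem exists_ringHom_map_rho_eq
    (hρ₀ : (X 0 - X 1) * ρ₀ = genericP - swapPS genericP)
    (hρ₁ : (X 0 - X 1) * ρ₁ = X 0 * genericP - X 1 * swapPS genericP)
    {R : Type*} [CommRing R] [IsDomain R] {h g : MvPowerSeries (Fin 2) R}
    (hh : swapPS h = h) (hg : swapPS g = g) (hg1 : constantCoeff g = 1) :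
    ∃ φ : BetaRing →+* R, map φ ρ₀ = h ∧ map φ ρ₁ = g := by
  obtain ⟨φ, hφ⟩ := exists_map_genericP_eq (q := g - X 1 * h) (by simp [hg1])
  have hswap : swapPS (g - X 1 * h) = g - X 0 * h := by
    rw [swapPS_eq_rename] at hh hg ⊢
    rw [map_sub, map_mul, hh, hg, rename_X, Equiv.swap_apply_right]
  have hX : (X 0 - X 1 : MvPowerSeries (Fin 2) R) ≠ 0 := X_sub_X_ne_zero (by decide)
  refine ⟨φ, mul_left_cancel₀ hX ?_, mul_left_cancel₀ hX ?_⟩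
  · have := congrArg (map φ) hρ₀
    simp only [map_mul, map_sub, map_X, map_swapPS, hφ, hswap] at this
    rw [this]
    ring
  · have := congrArg (map φ) hρ₁
    simp only [map_mul, map_sub, map_X, map_swapPS, hφ, hswap] at this
    rw [this]
    ring

theorem algebraicIndependent_rho
    (hρ₀ : (X 0 - X 1) * ρ₀ = genericP - swapPS genericP)
    (hρ₁ : (X 0 - X 1) * ρ₁ = X 0 * genericP - X 1 * swapPS genericP) :
    AlgebraicIndependent (MvPowerSeries (Fin 2) ℤ) ![ρ₀, ρ₁] := by
  have : IsDomain (MvPowerSeries (Fin 2) ℤ) := NoZeroDivisors.to_isDomain _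
  have hinf := infinite_setOf_swapPS_eq_and_constantCoeff_eq_one (R := ℤ)
  refine algebraicIndependent_of_forall_exists_algHom
    ![{h | swapPS h = h}, {g | swapPS g = g ∧ constantCoeff g = 1}]
    (Fin.forall_fin_two.2 ⟨hinf.mono fun g hg => hg.1, hinf⟩) fun x hx => ?_
  have hx0 : swapPS (x 0) = x 0 := hx 0 trivial
  have hx1 : swapPS (x 1) = x 1 ∧ constantCoeff (x 1) = 1 := hx 1 trivial
  obtain ⟨φ, hφ₀, hφ₁⟩ := exists_ringHom_map_rho_eq hρ₀ hρ₁ hx0 hx1.1 hx1.2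
  refine ⟨{ map φ with commutes' := fun F => ?_ }, funext (Fin.forall_fin_two.2 ⟨hφ₀, hφ₁⟩)⟩
  ext d
  simp [algebraMap_apply'']

end Rho

theorem map_psSubst {R S σ τ : Type*} [CommRing R] [CommRing S] [Fintype σ] [DecidableEq σ]
    (φ : R →+* S) (a : σ → MvPowerSeries τ R) (f : MvPowerSeries σ R) :
    map φ (psSubst a f) = psSubst (fun i => map φ (a i)) (map φ f) := by
  ext e
  rw [coeff_map]
  change φ (∑ d ∈ _, _) = ∑ d ∈ _, _
  simp only [map_sum, map_mul, ← coeff_map, map_prod, map_pow]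

theorem InZE₁E₂.mem_range_algebraMap {f : MvPowerSeries (Fin 2) BetaRing} (hf : InZE₁E₂ f) :
    f ∈ Set.range (algebraMap (MvPowerSeries (Fin 2) ℤ) (MvPowerSeries (Fin 2) BetaRing)) := by
  obtain ⟨g, rfl⟩ := hf
  refine ⟨psSubst ![X 0 + X 1, X 0 * X 1] g, ?_⟩
  rw [algebraMap_apply'', map_psSubst]
  congr 1
  ext1 i
  fin_cases i <;> simp [E₁, E₂]

theorem stmt13_general (ρ₀ ρ₁ : MvPowerSeries (Fin 2) BetaRing)
    (hρ₀ : (X 0 - X 1) * ρ₀ = genericP - swapPS genericP)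
    (hρ₁ : (X 0 - X 1) * ρ₁ = X 0 * genericP - X 1 * swapPS genericP) :
    IsUnit ρ₁ ∧
    ∀ u : (MvPowerSeries (Fin 2) BetaRing)ˣ, (u : MvPowerSeries (Fin 2) BetaRing) = ρ₁ →
      LinearIndependent (MvPowerSeries (Fin 2) ℤ) fun ab : ℕ × ℤ =>
        ρ₀ ^ ab.1 * ((u ^ ab.2 : (MvPowerSeries (Fin 2) BetaRing)ˣ) :
          MvPowerSeries (Fin 2) BetaRing) := by
  constructor
  · rw [isUnit_iff_constantCoeff, constantCoeff_eq_of_X_sub_X_mul_eq (by decide) hρ₁,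
      constantCoeff_genericP]
    exact isUnit_one
  · rintro u rfl
    exact linearIndependent_pow_mul_zpow_of_algebraicIndependent (algebraicIndependent_rho hρ₀ hρ₁)

theorem stmt13 (ρ₀ ρ₁ : MvPowerSeries (Fin 2) BetaRing)
    (hρ₀ : ((X 0 : MvPowerSeries (Fin 2) BetaRing) - X 1) * ρ₀ = genericP - swapPS genericP)
    (hρ₁ : ((X 0 : MvPowerSeries (Fin 2) BetaRing) - X 1) * ρ₁ =
      (X 0 : MvPowerSeries (Fin 2) BetaRing) * genericP -
        (X 1 : MvPowerSeries (Fin 2) BetaRing) * swapPS genericP) :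
    IsUnit ρ₁ ∧
    ∀ (u : (MvPowerSeries (Fin 2) BetaRing)ˣ), (u : MvPowerSeries (Fin 2) BetaRing) = ρ₁ →
      ∀ (s : Finset (ℕ × ℤ)) (f : ℕ × ℤ → MvPowerSeries (Fin 2) BetaRing),
        (∀ ab ∈ s, InZE₁E₂ (f ab)) →
        ∑ ab ∈ s, f ab * ρ₀ ^ ab.1 * ((u ^ ab.2 : (MvPowerSeries (Fin 2) BetaRing)ˣ) :
            MvPowerSeries (Fin 2) BetaRing) = 0 →
        ∀ ab ∈ s, f ab = 0 := by
  refine (stmt13_general ρ₀ ρ₁ hρ₀ hρ₁).imp_right fun h u hu s f hf hsum => ?_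
  simp only [mul_assoc] at hsum
  exact eq_zero_of_linearIndependent_of_sum_mul_eq_zero (h u hu)
    (fun ab hab => (hf ab hab).mem_range_algebraMap) hsum
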